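/- One-step contraction of the sketched Newton/IHS update (Lemma F.5): Let χ ∈ (0, 1/2], let A ∈ ℝ^{n×d} with AᵀA invertible, let k ∈ ℕ, and let B ∈ ℝ^{k×n} be a χ-embedding sketch for A. Let b ∈ ℝⁿ and θ₀ ∈ ℝ^d, set θ* := (AᵀA)⁻¹Aᵀb, and define θ̂ := θ₀ + ((1/k)·(BA)ᵀ(BA))⁻¹ · Aᵀ(b − Aθ₀). Then (θ̂ − θ*)ᵀ(AᵀA)(θ̂ − θ*) ≤ χ² · (θ₀ − θ*)ᵀ(AᵀA)(θ₀ − θ*). -/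

import Mathlib

/-! Write `G = AᵀA`, `H = (1/k) (BA)ᵀ(BA)`, `e = θ₀ - θ*` and `w = θhat - θ*`. Since
`G θ* = Aᵀb`, the update reads `w = e - H⁻¹ G e`, that is `H w = (H - G) e`. The first embedding
property bounds the bilinear form of `H - G` by `(χ/2) ‖A u‖ ‖A v‖`, so
`(1 - χ/2) ‖A w‖² ≤ wᵀ H w = wᵀ (H - G) e ≤ (χ/2) ‖A w‖ ‖A e‖`,
whence `‖A w‖ ≤ χ / (2 - χ) ‖A e‖ ≤ χ ‖A e‖`. The same lower bound on `H` shows that `H` is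
invertible; it also covers `k = 0`, where `1 / k = 0` forces `A v = 0` for all `v`. -/

open Matrix

noncomputable def norm2 {ι : Type*} [Fintype ι] (v : ι → ℝ) : ℝ :=
  Real.sqrt (∑ i, v i ^ 2)

/-- `S` is a `χ`-embedding sketch for `A`: (i) the sketched Gram matrix approximates the
Gram matrix in the bilinear-form sense, and (ii) norms of vectors in the column space of
`A` shrink by at most a `(1-χ)` factor. -/
def IsEmbeddingSketch {n d k : ℕ} (χ : ℝ) (A : Matrix (Fin n) (Fin d) ℝ)
    (S : Matrix (Fin k) (Fin n) ℝ) : Prop :=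
  (∀ u v : Fin d → ℝ,
      |u ⬝ᵥ (Aᵀ * ((1 / (k : ℝ)) • (Sᵀ * S) - 1) * A).mulVec v| ≤
        (χ / 2) * norm2 (A.mulVec u) * norm2 (A.mulVec v)) ∧
  (∀ v : Fin d → ℝ,
      (1 - χ) * (k : ℝ) * norm2 (A.mulVec v) ^ 2 ≤ norm2 ((S * A).mulVec v) ^ 2)

lemma norm2_nonneg {ι : Type*} [Fintype ι] (v : ι → ℝ) : 0 ≤ norm2 v :=
  Real.sqrt_nonneg _

lemma norm2_sq {ι : Type*} [Fintype ι] (v : ι → ℝ) : norm2 v ^ 2 = v ⬝ᵥ v := by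
  unfold norm2
  rw [Real.sq_sqrt (Finset.sum_nonneg fun i _ => sq_nonneg _)]
  simp [dotProduct, sq]

lemma dotProduct_gram {n d : ℕ} (A : Matrix (Fin n) (Fin d) ℝ) (v : Fin d → ℝ) :
    v ⬝ᵥ (Aᵀ * A).mulVec v = norm2 (A.mulVec v) ^ 2 := by
  rw [norm2_sq, ← mulVec_mulVec, dotProduct_mulVec, vecMul_transpose]

theorem stmt13 {n d k : ℕ} (χ : ℝ) (hχ0 : 0 < χ) (hχ1 : χ ≤ 1 / 2)
    (A : Matrix (Fin n) (Fin d) ℝ) (hA : IsUnit (Aᵀ * A))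
    (B : Matrix (Fin k) (Fin n) ℝ) (hB : IsEmbeddingSketch χ A B)
    (b : Fin n → ℝ) (θ₀ : Fin d → ℝ) :
    let θstar := (Aᵀ * A)⁻¹.mulVec (Aᵀ.mulVec b)
    let θhat := θ₀ + ((1 / (k : ℝ)) • ((B * A)ᵀ * (B * A)))⁻¹.mulVec
        (Aᵀ.mulVec (b - A.mulVec θ₀))
    (θhat - θstar) ⬝ᵥ (Aᵀ * A).mulVec (θhat - θstar) ≤
      χ ^ 2 * ((θ₀ - θstar) ⬝ᵥ (Aᵀ * A).mulVec (θ₀ - θstar)) := by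
  intro θstar θhat
  set H : Matrix (Fin d) (Fin d) ℝ := (1 / (k : ℝ)) • ((B * A)ᵀ * (B * A)) with hH
  have hdiff : Aᵀ * ((1 / (k : ℝ)) • (Bᵀ * B) - 1) * A = H - Aᵀ * A := by
    rw [hH, Matrix.mul_sub, Matrix.sub_mul, Matrix.mul_one, Matrix.mul_smul, Matrix.smul_mul,
      transpose_mul]
    simp only [Matrix.mul_assoc]
  have hform : ∀ u v : Fin d → ℝ, |u ⬝ᵥ (H - Aᵀ * A).mulVec v| ≤
      (χ / 2) * norm2 (A.mulVec u) * norm2 (A.mulVec v) := fun u v => hdiff ▸ hB.1 u v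
  have hlower : ∀ v : Fin d → ℝ,
      (1 - χ / 2) * norm2 (A.mulVec v) ^ 2 ≤ v ⬝ᵥ H.mulVec v := by
    intro v
    have h := (abs_le.mp (hform v v)).1
    rw [sub_mulVec, dotProduct_sub, dotProduct_gram] at h
    nlinarith
  have hHunit : IsUnit H := by
    rw [← mulVec_injective_iff_isUnit]
    refine (injective_iff_map_eq_zero H.mulVecLin).mpr fun v hv => ?_
    have hv' : H.mulVec v = 0 := hv
    have h := hlower v
    rw [hv', dotProduct_zero] at h
    have hsq : norm2 (A.mulVec v) ^ 2 = 0 := by nlinarith [sq_nonneg (norm2 (A.mulVec v))]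
    rw [norm2_sq, dotProduct_self_eq_zero] at hsq
    apply mulVec_injective_iff_isUnit.mpr hA
    rw [← mulVec_mulVec, hsq, mulVec_zero, mulVec_zero]
  have hHdet := (isUnit_iff_isUnit_det H).mp hHunit
  have hGdet := (isUnit_iff_isUnit_det (Aᵀ * A)).mp hA
  -- the normal equations for `θ*`
  have hstar : (Aᵀ * A).mulVec θstar = Aᵀ.mulVec b := by
    simp only [θstar]
    rw [mulVec_mulVec, mul_nonsing_inv _ hGdet, one_mulVec]
  have hresid : H.mulVec (θhat - θstar) = (H - Aᵀ * A).mulVec (θ₀ - θstar) := by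
    simp only [θhat]
    rw [mulVec_sub, mulVec_add, mulVec_mulVec, mul_nonsing_inv _ hHdet, one_mulVec, sub_mulVec,
      mulVec_sub (Aᵀ * A), hstar, mulVec_sub H, mulVec_sub Aᵀ, mulVec_mulVec]
    abel
  rw [dotProduct_gram, dotProduct_gram]
  have h1 := hlower (θhat - θstar)
  rw [hresid] at h1
  have h2 := h1.trans ((le_abs_self _).trans (hform (θhat - θstar) (θ₀ - θstar)))
  have hx := norm2_nonneg (A.mulVec (θhat - θstar))
  have hy := norm2_nonneg (A.mulVec (θ₀ - θstar))
  generalize norm2 (A.mulVec (θhat - θstar)) = x at *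
  generalize norm2 (A.mulVec (θ₀ - θstar)) = y at *
  have hxy : x ≤ χ * y := by
    rcases hx.eq_or_lt with h0 | h0
    · rw [← h0]; positivity
    · have h3 : (1 - χ / 2) * x ≤ χ / 2 * y := by
        refine le_of_mul_le_mul_right ?_ h0
        linarith
      nlinarith
  rw [← mul_pow]
  exact pow_le_pow_left₀ hx hxy 2
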